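/- arXiv:1606.02937 — 2 statements merged into one kernel-verified Lean document; each statement's English description precedes it below -/
import Mathlib

section
/- Let n ≥ 1 and let φ : ℝⁿ → ℂ be a nonzero Schwartz function (so that xφ ≠ 0). Then the following are equivalent: (i) n‖φ‖² = 2‖xφ‖‖∇φ‖; (ii) ‖∇φ‖ xφ = −‖xφ‖ ∇φ; (iii) there exists θ ∈ ℝ such that φ(x) = e^{iθ} (‖∇φ‖/(π‖xφ‖))^{n/4} ‖φ‖ exp(−(‖∇φ‖/‖xφ‖) |x|²/2) for all x ∈ ℝⁿ. -/
/-!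
Integration by parts gives `2 Re ⟨xφ, ∇φ⟩ = -n ‖φ‖²`, the real part of the canonical commutation
relation, so `n ‖φ‖² ≤ 2 ‖xφ‖ ‖∇φ‖` is the Cauchy–Schwarz inequality for the vectors `xφ` and
`-∇φ` of the real Hilbert space `L²(V, F)ⁿ`. Equality therefore means `‖∇φ‖ xφ = -‖xφ‖ ∇φ`, which is
the differential equation `∇φ = -a x φ` with `a = ‖∇φ‖ / ‖xφ‖`; its solutions are the multiples
of `exp (-a |x|² / 2)`, and the `L²` norm fixes the modulus of the factor.
-/

open MeasureTheory Module SchwartzMap LineDeriv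

section Leibniz

variable {E F : Type*} [NormedAddCommGroup E] [NormedSpace ℝ E]
  [NormedAddCommGroup F] [NormedSpace ℝ F]

theorem lineDerivOp_smulLeftCLM_continuousLinearMap (ℓ : E →L[ℝ] ℝ) (v : E) (f : 𝓢(E, F)) :
    ∂_{v} (smulLeftCLM F ℓ f) = ℓ v • f + smulLeftCLM F ℓ (∂_{v} f) := by
  ext x
  rw [lineDerivOp_apply_eq_fderiv, smulLeftCLM_apply ℓ.hasTemperateGrowth,
    fderiv_fun_smul ℓ.differentiableAt f.differentiableAt]
  simp [smulLeftCLM_apply_apply ℓ.hasTemperateGrowth, lineDerivOp_apply_eq_fderiv, add_comm]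

end Leibniz

section L2

variable {E F : Type*} [NormedAddCommGroup E] [NormedSpace ℝ E] [MeasurableSpace E]
  [OpensMeasurableSpace E] [NormedAddCommGroup F] [InnerProductSpace ℝ F]
  [SecondCountableTopologyEither E F] (μ : Measure E) [μ.HasTemperateGrowth]

theorem inner_toLp_two (f g : 𝓢(E, F)) :
    inner ℝ (f.toLp 2 μ) (g.toLp 2 μ) = ∫ x, inner ℝ (f x) (g x) ∂μ := by
  rw [L2.inner_def]
  refine integral_congr_ae ?_
  filter_upwards [f.coeFn_toLp 2 μ, g.coeFn_toLp 2 μ] with x hf hg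
  rw [hf, hg]

theorem norm_toLp_two_sq (f : 𝓢(E, F)) : ‖f.toLp 2 μ‖ ^ 2 = ∫ x, ‖f x‖ ^ 2 ∂μ := by
  simp only [← real_inner_self_eq_norm_sq, inner_toLp_two]

theorem inner_toLp_smulLeftCLM_left {h : E → ℝ} (hh : h.HasTemperateGrowth) (f g : 𝓢(E, F)) :
    inner ℝ ((smulLeftCLM F h f).toLp 2 μ) (g.toLp 2 μ) =
      inner ℝ (f.toLp 2 μ) ((smulLeftCLM F h g).toLp 2 μ) := by
  simp only [inner_toLp_two, smulLeftCLM_apply_apply hh, real_inner_smul_left,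
    real_inner_smul_right]

end L2

section IntegrationByParts

variable {E F : Type*} [NormedAddCommGroup E] [NormedSpace ℝ E] [FiniteDimensional ℝ E]
  [MeasurableSpace E] [BorelSpace E] [NormedAddCommGroup F] [InnerProductSpace ℝ F]
  (μ : Measure E) [μ.IsAddHaarMeasure]

theorem inner_toLp_lineDerivOp_right (f g : 𝓢(E, F)) (v : E) :
    inner ℝ (f.toLp 2 μ) ((∂_{v} g).toLp 2 μ) = -inner ℝ ((∂_{v} f).toLp 2 μ) (g.toLp 2 μ) := by
  simp only [inner_toLp_two]
  exact integral_bilinear_lineDerivOp_right_eq_neg_left f g (innerSL ℝ) v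

theorem two_mul_inner_toLp_smulLeftCLM_lineDerivOp (ℓ : E →L[ℝ] ℝ) (v : E) (f : 𝓢(E, F)) :
    2 * inner ℝ ((smulLeftCLM F ℓ f).toLp 2 μ) ((∂_{v} f).toLp 2 μ) =
      -(ℓ v * ‖f.toLp 2 μ‖ ^ 2) := by
  have hparts := inner_toLp_lineDerivOp_right μ (smulLeftCLM F ℓ f) f v
  have hsymm := inner_toLp_smulLeftCLM_left μ ℓ.hasTemperateGrowth (∂_{v} f) f
  have hleibniz : (∂_{v} (smulLeftCLM F ℓ f)).toLp 2 μ =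
      ℓ v • f.toLp 2 μ + (smulLeftCLM F ℓ (∂_{v} f)).toLp 2 μ := by
    rw [lineDerivOp_smulLeftCLM_continuousLinearMap]
    exact map_add (toLpCLM ℝ F 2 μ) _ _
  rw [hleibniz, inner_add_left, real_inner_smul_left, real_inner_self_eq_norm_sq, hsymm,
    real_inner_comm ((smulLeftCLM F ℓ f).toLp 2 μ)] at hparts
  linarith

end IntegrationByParts

section Gaussian

variable {V F : Type*} [NormedAddCommGroup V] [InnerProductSpace ℝ V] [NormedAddCommGroup F]

section NormedSpace

variable [NormedSpace ℝ F]

theorem hasFDerivAt_exp_mul_norm_sq_div_two (a : ℝ) (x : V) :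
    HasFDerivAt (fun y : V => Real.exp (a * ‖y‖ ^ 2 / 2))
      ((Real.exp (a * ‖x‖ ^ 2 / 2) * a) • innerSL ℝ x) x := by
  convert! (((hasStrictFDerivAt_norm_sq x).hasFDerivAt.const_mul a).mul_const (2⁻¹ : ℝ)).exp
    using 1
  simp only [div_eq_mul_inv]
  module

theorem fderiv_eq_smulRight_innerSL_iff_exists_eq_exp_smul {f : V → F} {a : ℝ}
    (hf : Differentiable ℝ f) :
    (∀ x, fderiv ℝ f x = (-a • innerSL ℝ x).smulRight (f x)) ↔
      ∃ c, ∀ x, f x = Real.exp (-a * ‖x‖ ^ 2 / 2) • c := by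
  constructor
  · intro h
    have hderiv (y : V) :
        HasFDerivAt (fun y => Real.exp (a * ‖y‖ ^ 2 / 2) • f y) (0 : V →L[ℝ] F) y := by
      convert! (hasFDerivAt_exp_mul_norm_sq_div_two a y).smul (hf y).hasFDerivAt using 1
      ext v
      simp [h, smul_smul, mul_assoc]
    have hconst (x : V) : Real.exp (a * ‖x‖ ^ 2 / 2) • f x = f 0 := by
      simpa using is_const_of_fderiv_eq_zero (𝕜 := ℝ) (fun y => (hderiv y).differentiableAt)
        (fun y => (hderiv y).fderiv) x 0
    refine ⟨f 0, fun x => ?_⟩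
    rw [← hconst x, smul_smul, ← Real.exp_add, neg_mul, neg_div, neg_add_cancel, Real.exp_zero,
      one_smul]
  · rintro ⟨c, hc⟩ x
    rw [hc x, funext hc, ((hasFDerivAt_exp_mul_norm_sq_div_two (-a) x).smul_const c).fderiv]
    ext v
    simp only [smul_apply, ContinuousLinearMap.smulRight_apply]
    module

theorem forall_smul_inner_smul_eq_neg_smul_fderiv_iff {ι : Type*} [Fintype ι]
    (b : OrthonormalBasis ι ℝ V) {f : V → F} {s t : ℝ} (ht : t ≠ 0) (x : V) :
    (∀ i, s • inner ℝ (b i) x • f x = -(t • fderiv ℝ f x (b i))) ↔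
      fderiv ℝ f x = (-(s / t) • innerSL ℝ x).smulRight (f x) := by
  have hcoord (i : ι) : s • inner ℝ (b i) x • f x = -(t • fderiv ℝ f x (b i)) ↔
      fderiv ℝ f x (b i) = (-(s / t) • innerSL ℝ x).smulRight (f x) (b i) := by
    have hsmul : t • (-(s / t) • innerSL ℝ x).smulRight (f x) (b i) =
        -(s • inner ℝ (b i) x • f x) := by
      simp [real_inner_comm, smul_smul, mul_div_cancel₀, ht, ← mul_assoc]
    rw [eq_comm, neg_eq_iff_eq_neg, ← smul_right_inj ht (m₁ := fderiv ℝ f x (b i)), hsmul]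
  simp only [hcoord]
  refine ⟨fun h => ContinuousLinearMap.coe_injective (b.toBasis.ext fun i => ?_), fun h i => ?_⟩
  · simpa only [b.coe_toBasis, ContinuousLinearMap.coe_coe] using h i
  · rw [h]

end NormedSpace

variable [InnerProductSpace ℝ F] [FiniteDimensional ℝ V] [MeasurableSpace V] [BorelSpace V]

theorem norm_eq_of_eq_exp_smul {f : 𝓢(V, F)} {a : ℝ} (ha : 0 < a) {c : F}
    (h : ∀ x, f x = Real.exp (-a * ‖x‖ ^ 2 / 2) • c) :
    ‖c‖ = (a / Real.pi) ^ ((finrank ℝ V : ℝ) / 4) * ‖f.toLp 2‖ := by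
  have hint : ‖f.toLp 2‖ ^ 2 = (Real.pi / a) ^ ((finrank ℝ V : ℝ) / 2) * ‖c‖ ^ 2 := by
    rw [norm_toLp_two_sq, ← GaussianFourier.integral_rexp_neg_mul_sq_norm ha, ← integral_mul_const]
    refine integral_congr_ae (.of_forall fun x => ?_)
    simp only [h, norm_smul, mul_pow, Real.norm_eq_abs, sq_abs, ← Real.exp_nat_mul]
    ring_nf
  have hpos : 0 < a / Real.pi := by positivity
  have hrpow : ((a / Real.pi) ^ ((finrank ℝ V : ℝ) / 4)) ^ 2 *
      (Real.pi / a) ^ ((finrank ℝ V : ℝ) / 2) = 1 := by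
    rw [← Real.rpow_mul_natCast hpos.le, ← inv_div a, Real.inv_rpow hpos.le, Nat.cast_ofNat,
      show (finrank ℝ V : ℝ) / 4 * 2 = finrank ℝ V / 2 by ring,
      mul_inv_cancel₀ (Real.rpow_pos_of_pos hpos _).ne']
  rw [← sq_eq_sq₀ (norm_nonneg c) (by positivity), mul_pow, hint, ← mul_assoc, hrpow, one_mul]

theorem exists_eq_exp_smul_iff_exists_norm_eq_one {f : 𝓢(V, F)} (hf : f ≠ 0) {a : ℝ} (ha : 0 < a) :
    (∃ c, ∀ x, f x = Real.exp (-a * ‖x‖ ^ 2 / 2) • c) ↔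
      ∃ u, ‖u‖ = 1 ∧ ∀ x, f x =
        ((a / Real.pi) ^ ((finrank ℝ V : ℝ) / 4) * ‖f.toLp 2‖ *
          Real.exp (-a * ‖x‖ ^ 2 / 2)) • u := by
  constructor
  · rintro ⟨c, hc⟩
    have hc0 : c ≠ 0 := fun h => hf (SchwartzMap.ext fun x => by simp [hc x, h])
    refine ⟨‖c‖⁻¹ • c, norm_smul_inv_norm hc0, fun x => ?_⟩
    rw [← norm_eq_of_eq_exp_smul ha hc, mul_comm, mul_smul,
      smul_inv_smul₀ (norm_ne_zero_iff.mpr hc0), hc]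
  · rintro ⟨u, -, hu⟩
    exact ⟨_, fun x => by rw [hu x, mul_comm, mul_smul]⟩

end Gaussian

section SqueezedStates

variable {ι V F : Type*} [Fintype ι] [NormedAddCommGroup V] [InnerProductSpace ℝ V]
  [FiniteDimensional ℝ V] [MeasurableSpace V] [BorelSpace V]
  [NormedAddCommGroup F] [InnerProductSpace ℝ F]
  (b : OrthonormalBasis ι ℝ V) (f : 𝓢(V, F))

/-- The vector `xf` of `L²(V, F)ⁿ`, whose components are the products of `f` with the coordinates
of `x` in the orthonormal basis `b`. -/
noncomputable def positionLp : PiLp 2 fun _ : ι => Lp F 2 (volume : Measure V) :=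
  WithLp.toLp 2 fun i => (smulLeftCLM F (innerSL ℝ (b i)) f).toLp 2

/-- The vector `∇f` of `L²(V, F)ⁿ`, whose components are the derivatives of `f` along the
orthonormal basis `b`. -/
noncomputable def gradientLp : PiLp 2 fun _ : ι => Lp F 2 (volume : Measure V) :=
  WithLp.toLp 2 fun i => (∂_{b i} f).toLp 2

theorem norm_positionLp :
    ‖positionLp b f‖ = √(∑ i, ∫ x, ‖inner ℝ (b i) x • f x‖ ^ 2) := by
  simp only [PiLp.norm_eq_of_L2, positionLp, norm_toLp_two_sq,
    smulLeftCLM_apply_apply (innerSL ℝ (b _)).hasTemperateGrowth, innerSL_apply_apply]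

theorem norm_gradientLp :
    ‖gradientLp b f‖ = √(∑ i, ∫ x, ‖fderiv ℝ f x (b i)‖ ^ 2) := by
  simp only [PiLp.norm_eq_of_L2, gradientLp, norm_toLp_two_sq, lineDerivOp_apply_eq_fderiv]

theorem two_mul_inner_positionLp_gradientLp :
    2 * inner ℝ (positionLp b f) (gradientLp b f) = -(finrank ℝ V * ‖f.toLp 2‖ ^ 2) := by
  simp only [PiLp.inner_apply, positionLp, gradientLp, Finset.mul_sum,
    two_mul_inner_toLp_smulLeftCLM_lineDerivOp, innerSL_apply_apply, real_inner_self_eq_norm_sq,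
    b.norm_eq_one, finrank_eq_card_basis b.toBasis]
  simp

theorem finrank_mul_norm_sq_eq_iff_smul_positionLp_eq :
    finrank ℝ V * ‖f.toLp 2‖ ^ 2 = 2 * (‖positionLp b f‖ * ‖gradientLp b f‖) ↔
      ‖gradientLp b f‖ • positionLp b f = -(‖positionLp b f‖ • gradientLp b f) := by
  have hequality := inner_eq_norm_mul_iff_real (x := positionLp b f) (y := -gradientLp b f)
  rw [norm_neg, smul_neg, inner_neg_right] at hequality
  rw [← hequality]
  constructor <;> intro h <;> linarith [two_mul_inner_positionLp_gradientLp b f]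

theorem smul_positionLp_eq_neg_smul_gradientLp_iff (s t : ℝ) :
    s • positionLp b f = -(t • gradientLp b f) ↔
      ∀ x i, s • inner ℝ (b i) x • f x = -(t • fderiv ℝ f x (b i)) := by
  have hcomponent (i : ι) : s • positionLp b f i = -(t • gradientLp b f i) ↔
      s • smulLeftCLM F (innerSL ℝ (b i)) f = -(t • ∂_{b i} f) :=
    (injective_toLp (F := F) 2 (volume : Measure V)).eq_iff
      (a := s • smulLeftCLM F (innerSL ℝ (b i)) f) (b := -(t • ∂_{b i} f))
  rw [forall_comm]
  simp only [PiLp.ext_iff, PiLp.smul_apply, PiLp.neg_apply, hcomponent, SchwartzMap.ext_iff,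
    smul_apply, neg_apply, lineDerivOp_apply_eq_fderiv,
    smulLeftCLM_apply_apply (innerSL ℝ (b _)).hasTemperateGrowth, innerSL_apply_apply]

variable {f}

theorem inner_positionLp_gradientLp_ne_zero [Nontrivial V] (hf : f ≠ 0) :
    inner ℝ (positionLp b f) (gradientLp b f) ≠ 0 := by
  intro h
  have hnorm : f.toLp 2 (volume : Measure V) ≠ 0 :=
    (injective_toLp 2 (volume : Measure V)).ne hf
  have hdim : (finrank ℝ V : ℝ) ≠ 0 := by exact_mod_cast finrank_pos.ne'
  have hcomm := two_mul_inner_positionLp_gradientLp b f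
  simp [h, hnorm, hdim] at hcomm

theorem stmt_15_general [Nontrivial V] (hf : f ≠ 0) :
    List.TFAE
      [finrank ℝ V * ‖f.toLp 2‖ ^ 2 = 2 * (‖positionLp b f‖ * ‖gradientLp b f‖),
        ∀ x i, ‖gradientLp b f‖ • inner ℝ (b i) x • f x =
          -(‖positionLp b f‖ • fderiv ℝ f x (b i)),
        ∃ u, ‖u‖ = 1 ∧ ∀ x, f x =
          ((‖gradientLp b f‖ / (Real.pi * ‖positionLp b f‖)) ^ ((finrank ℝ V : ℝ) / 4) *
            ‖f.toLp 2‖ * Real.exp (-(‖gradientLp b f‖ / ‖positionLp b f‖) * ‖x‖ ^ 2 / 2)) • u] := by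
  have hinner := inner_positionLp_gradientLp_ne_zero b hf
  have hX : 0 < ‖positionLp b f‖ := norm_pos_iff.mpr fun h => hinner (by rw [h, inner_zero_left])
  have hD : 0 < ‖gradientLp b f‖ := norm_pos_iff.mpr fun h => hinner (by rw [h, inner_zero_right])
  tfae_have 1 ↔ 2 := by
    rw [finrank_mul_norm_sq_eq_iff_smul_positionLp_eq, smul_positionLp_eq_neg_smul_gradientLp_iff]
  tfae_have 2 ↔ 3 := by
    simp only [forall_smul_inner_smul_eq_neg_smul_fderiv_iff b hX.ne']
    rw [fderiv_eq_smulRight_innerSL_iff_exists_eq_exp_smul f.differentiable,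
      exists_eq_exp_smul_iff_exists_norm_eq_one hf (div_pos hD hX), div_div,
      mul_comm ‖positionLp b f‖]
  tfae_finish

end SqueezedStates

/-- Characterization of the squeezed states: for a nonzero Schwartz function `φ`,
`n‖φ‖² = 2‖xφ‖‖∇φ‖` iff `‖∇φ‖ xφ = −‖xφ‖ ∇φ` iff `φ` is a Gaussian with
width `‖xφ‖/‖∇φ‖` up to a phase.  Here `nφ, nX, nD` are the `L²` norms of
`φ`, `xφ` and `∇φ`. -/
theorem stmt_15 (n : ℕ) (hn : 1 ≤ n)
    (φ : SchwartzMap (EuclideanSpace ℝ (Fin n)) ℂ) (hφ : φ ≠ 0)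
    (nφ nX nD : ℝ)
    (hnφ : nφ = Real.sqrt (∫ x, ‖φ x‖ ^ 2))
    (hnX : nX = Real.sqrt (∑ j, ∫ x, ‖(x j : ℂ) * φ x‖ ^ 2))
    (hnD : nD = Real.sqrt
        (∑ j, ∫ x, ‖fderiv ℝ (⇑φ) x (EuclideanSpace.single j 1)‖ ^ 2)) :
    List.TFAE
      [(n : ℝ) * nφ ^ 2 = 2 * (nX * nD),
        ∀ (x : EuclideanSpace ℝ (Fin n)) (j : Fin n),
          (nD : ℂ) * ((x j : ℂ) * φ x)
            = -((nX : ℂ) * fderiv ℝ (⇑φ) x (EuclideanSpace.single j 1)),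
        ∃ θ : ℝ, ∀ x : EuclideanSpace ℝ (Fin n),
          φ x = Complex.exp (θ * Complex.I) *
            (((nD / (Real.pi * nX)) ^ ((n : ℝ) / 4) : ℝ) : ℂ) * (nφ : ℂ) *
            Complex.exp (-((nD / nX : ℝ) : ℂ) * ((‖x‖ : ℂ) ^ 2) / 2)] := by
  have : Nonempty (Fin n) := ⟨⟨0, hn⟩⟩
  have hfφ : nφ = ‖φ.toLp 2‖ := by
    rw [hnφ, ← norm_toLp_two_sq, Real.sqrt_sq (norm_nonneg _)]
  have hfX : nX = ‖positionLp (EuclideanSpace.basisFun (Fin n) ℝ) φ‖ := by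
    simp [hnX, norm_positionLp, EuclideanSpace.inner_single_left]
  have hfD : nD = ‖gradientLp (EuclideanSpace.basisFun (Fin n) ℝ) φ‖ := by
    simp [hnD, norm_gradientLp]
  have h := stmt_15_general (EuclideanSpace.basisFun (Fin n) ℝ) hφ
  rw [← hfφ, ← hfX, ← hfD] at h
  simpa [EuclideanSpace.inner_single_left, Complex.norm_eq_one_iff, mul_comm, mul_assoc,
    mul_left_comm] using h
end

section
/- Let n ≥ 3 and let φ : ℝⁿ → ℂ be a smooth function with compact support contained in ℝⁿ \ {0}, with Aφ ≠ 0 and Bφ ≠ 0, where Aφ(x) = −i (x/|x|)·∇φ(x) − i((n−1)/(2|x|))φ(x) (the symmetrized radial derivative applied to φ) and Bφ(x) = φ(x)/|x| (the Coulomb potential applied to φ). Then: (1) ‖Bφ‖² = −2 Im (Aφ|Bφ) = ‖Aφ‖‖Bφ‖ (2 − ‖ Aφ/‖Aφ‖ + i Bφ/‖Bφ‖ ‖²); (2) ‖Aφ‖² = ‖∂_r φ‖² − ((n−1)(n−3)/4) ‖Bφ‖², where ∂_r φ = (x/|x|)·∇φ; and consequently (3) ‖φ/|x|‖ ≤ 2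 ‖ ∂_r φ + ((n−1)/(2|x|)) φ ‖. -/
/-!
Put `u = φ/|x|`. Since `φ` vanishes near the origin, `u` is again of class `C¹` with compact
support, and `∂_r φ = (x·∇)u + u`. The divergence theorem for the field `|u|² x` therefore gives
the virial identity `2 Re(∂_r φ|u) = (2 − n)‖u‖²`. The correction `((n−1)/2)u` is exactly what
turns the constant `2 − n` into `1`: for `Sφ = ∂_r φ + ((n−1)/2)u` one gets `2 Re(Sφ|u) = ‖u‖²`.
As `Aφ = −i Sφ`, the identities (1) and (2) follow by expanding squares in `L²`, and (3) by the
Cauchy–Schwarz inequality.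
-/

open MeasureTheory Module

section IntegrationByParts

variable {E F G : Type*} [NormedAddCommGroup E] [NormedSpace ℝ E] [FiniteDimensional ℝ E]
  [MeasurableSpace E] [BorelSpace E] {μ : Measure E} [μ.IsAddHaarMeasure]
  [NormedAddCommGroup F] [InnerProductSpace ℝ F] [NormedAddCommGroup G] [NormedSpace ℝ G]

theorem integral_fderiv_self_eq_neg_finrank_smul_integral {h : E → G} (hh : ContDiff ℝ 1 h)
    (hc : HasCompactSupport h) :
    ∫ x, fderiv ℝ h x x ∂μ = -((finrank ℝ E : ℝ) • ∫ x, h x ∂μ) := by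
  let b := finBasis ℝ E
  let coord (i : Fin (finrank ℝ E)) : E →L[ℝ] ℝ := (b.coord i).toContinuousLinearMap
  have fderiv_self_eq_sum (x : E) : fderiv ℝ h x x = ∑ i, coord i x • fderiv ℝ h x (b i) := by
    have expansion := congrArg (fderiv ℝ h x) (b.sum_repr x)
    rw [map_sum] at expansion
    simpa only [map_smul, coord, LinearMap.coe_toContinuousLinearMap', Basis.coord_apply] using
      expansion.symm
  have cont_fderiv : Continuous (fderiv ℝ h) := hh.continuous_fderiv one_ne_zero
  have integrable_term (i : Fin (finrank ℝ E)) :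
      Integrable (fun x => coord i x • fderiv ℝ h x (b i)) μ :=
    ((coord i).continuous.smul (cont_fderiv.clm_apply continuous_const))
      |>.integrable_of_hasCompactSupport (hc.fderiv_apply ℝ _).smul_left
  have integral_term (i : Fin (finrank ℝ E)) :
      ∫ x, coord i x • fderiv ℝ h x (b i) ∂μ = -∫ x, h x ∂μ := by
    have fderiv_coord (x : E) : fderiv ℝ (coord i) x (b i) = 1 := by
      rw [(coord i).fderiv]
      simp [coord]
    rw [integral_smul_fderiv_eq_neg_fderiv_smul_of_integrable _ (integrable_term i) _
      (fun x _ => (coord i).differentiableAt) fun x _ => hh.differentiable one_ne_zero x]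
    · simp only [fderiv_coord, one_smul]
    · simpa only [fderiv_coord, one_smul] using hh.continuous.integrable_of_hasCompactSupport hc
    · exact ((coord i).continuous.smul hh.continuous).integrable_of_hasCompactSupport hc.smul_left
  simp_rw [fderiv_self_eq_sum]
  rw [integral_finsetSum _ fun i _ => integrable_term i]
  simp [integral_term, Nat.cast_smul_eq_nsmul]

theorem two_mul_integral_inner_fderiv_self {u : E → F} (hu : ContDiff ℝ 1 u)
    (hc : HasCompactSupport u) :
    2 * ∫ x, inner ℝ (u x) (fderiv ℝ u x x) ∂μ = -(finrank ℝ E * ∫ x, ‖u x‖ ^ 2 ∂μ) := by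
  have fderiv_norm_sq (x : E) :
      fderiv ℝ (fun y => ‖u y‖ ^ 2) x x = 2 * inner ℝ (u x) (fderiv ℝ u x x) := by
    simp [(hu.differentiable one_ne_zero x).hasFDerivAt.norm_sq.fderiv]
  have divergence := integral_fderiv_self_eq_neg_finrank_smul_integral (μ := μ) (hu.norm_sq ℝ)
    (hc.comp_left (g := fun z => ‖z‖ ^ 2) (by simp))
  simpa only [fderiv_norm_sq, integral_const_mul, smul_eq_mul] using divergence

end IntegrationByParts

section L2

variable {α 𝕜 F : Type*} [MeasurableSpace α] {μ : Measure α} [RCLike 𝕜] [NormedAddCommGroup F]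
  {f g : α → F}

theorem inner_toLp_toLp [InnerProductSpace 𝕜 F] (hf : MemLp f 2 μ) (hg : MemLp g 2 μ) :
    inner 𝕜 (hf.toLp f) (hg.toLp g) = ∫ x, inner 𝕜 (f x) (g x) ∂μ := by
  rw [L2.inner_def]
  refine integral_congr_ae ?_
  filter_upwards [hf.coeFn_toLp, hg.coeFn_toLp] with x hfx hgx
  rw [hfx, hgx]

theorem norm_toLp_eq_sqrt (hf : MemLp f 2 μ) :
    ‖hf.toLp f‖ = √(∫ x, ‖f x‖ ^ 2 ∂μ) := by
  rw [Lp.norm_toLp, hf.eLpNorm_eq_integral_rpow_norm two_ne_zero ENNReal.ofNat_ne_top,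
    ENNReal.toReal_ofReal (by positivity), Real.sqrt_eq_rpow]
  simp

theorem norm_sq_toLp (hf : MemLp f 2 μ) : ‖hf.toLp f‖ ^ 2 = ∫ x, ‖f x‖ ^ 2 ∂μ := by
  rw [norm_toLp_eq_sqrt, Real.sq_sqrt (integral_nonneg fun x => by positivity)]

theorem integrable_inner_of_memLp_two [InnerProductSpace 𝕜 F] (hf : MemLp f 2 μ)
    (hg : MemLp g 2 μ) : Integrable (fun x => inner 𝕜 (f x) (g x)) μ := by
  refine (L2.integrable_inner (𝕜 := 𝕜) (hf.toLp f) (hg.toLp g)).congr ?_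
  filter_upwards [hf.coeFn_toLp, hg.coeFn_toLp] with x hfx hgx
  rw [hfx, hgx]

end L2

section UncertaintyIdentity

variable {H : Type*} [NormedAddCommGroup H] [InnerProductSpace ℂ H]

theorem norm_mul_norm_mul_two_sub_norm_sq {a b : H} (ha : a ≠ 0) (hb : b ≠ 0) :
    ‖a‖ * ‖b‖ * (2 - ‖(‖a‖ : ℂ)⁻¹ • a + Complex.I • (‖b‖ : ℂ)⁻¹ • b‖ ^ 2) =
      -2 * (inner ℂ b a).im := by
  have ha' : ‖a‖ ≠ 0 := norm_ne_zero_iff.2 ha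
  have hb' : ‖b‖ ≠ 0 := norm_ne_zero_iff.2 hb
  have re_inner : (inner ℂ ((‖a‖ : ℂ)⁻¹ • a) (Complex.I • (‖b‖ : ℂ)⁻¹ • b)).re =
      (inner ℂ b a).im / (‖a‖ * ‖b‖) := by
    rw [inner_smul_left, inner_smul_right, inner_smul_right, ← inner_conj_symm a b]
    simp only [← Complex.ofReal_inv, Complex.conj_ofReal, Complex.re_ofReal_mul,
      Complex.I_mul_re, Complex.im_ofReal_mul, Complex.conj_im]
    field_simp
  rw [norm_add_sq (𝕜 := ℂ), RCLike.re_eq_complex_re, re_inner]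
  simp only [norm_smul, norm_inv, Complex.norm_real, norm_norm, Complex.norm_I, one_mul,
    inv_mul_cancel₀ ha', inv_mul_cancel₀ hb']
  field_simp
  ring

variable {α : Type*} [MeasurableSpace α] {μ : Measure α} {f g : α → H} {nf ng : ℝ}

theorem mul_mul_two_sub_integral_norm_sq (hf : MemLp f 2 μ) (hg : MemLp g 2 μ)
    (hnf : nf = √(∫ x, ‖f x‖ ^ 2 ∂μ)) (hng : ng = √(∫ x, ‖g x‖ ^ 2 ∂μ))
    (hnf0 : nf ≠ 0) (hng0 : ng ≠ 0) :
    nf * ng * (2 - ∫ x, ‖(nf : ℂ)⁻¹ • f x + Complex.I • (ng : ℂ)⁻¹ • g x‖ ^ 2 ∂μ) =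
      -2 * (∫ x, inner ℂ (g x) (f x) ∂μ).im := by
  rw [← norm_toLp_eq_sqrt hf] at hnf
  rw [← norm_toLp_eq_sqrt hg] at hng
  subst hnf hng
  have identity := norm_mul_norm_mul_two_sub_norm_sq (norm_ne_zero_iff.1 hnf0)
    (norm_ne_zero_iff.1 hng0)
  rw [inner_toLp_toLp] at identity
  rw [← identity, ← MemLp.toLp_const_smul, ← MemLp.toLp_const_smul, ← MemLp.toLp_const_smul,
    ← MemLp.toLp_add, norm_sq_toLp]
  rfl

end UncertaintyIdentity

section RadialDerivative

variable {E F : Type*} [NormedAddCommGroup E] [NormedAddCommGroup F]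

/-- Multiplication by the Coulomb potential `1/|x|`; the value at the origin is `0`. -/
noncomputable def coulombPotential [NormedSpace ℝ F] (φ : E → F) (x : E) : F :=
  ‖x‖⁻¹ • φ x

/-- The radial derivative `∂_r φ = (x/|x|)·∇φ`; the value at the origin is `0`. -/
noncomputable def radialDeriv [NormedSpace ℝ E] [NormedSpace ℝ F] (φ : E → F) (x : E) : F :=
  ‖x‖⁻¹ • fderiv ℝ φ x x

/-- The radial derivative corrected to an antisymmetric operator, `∂_r φ + ((n-1)/(2|x|)) φ` in
dimension `n`. -/
noncomputable def symmRadialDeriv [NormedSpace ℝ E] [NormedSpace ℝ F] (φ : E → F) (x : E) : F :=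
  radialDeriv φ x + (((finrank ℝ E : ℝ) - 1) / 2) • coulombPotential φ x

/-- The symmetric operator `-i (∂_r + (n-1)/(2|x|))` in dimension `n`: the radial component of the
quantum mechanical momentum. -/
noncomputable def radialMomentum [NormedSpace ℝ E] [NormedSpace ℂ F] (φ : E → F) (x : E) : F :=
  -Complex.I • symmRadialDeriv φ x

theorem norm_radialMomentum [NormedSpace ℝ E] [NormedSpace ℂ F] (φ : E → F) (x : E) :
    ‖radialMomentum φ x‖ = ‖symmRadialDeriv φ x‖ := by
  simp [radialMomentum, norm_smul]

theorem hasCompactSupport_coulombPotential [NormedSpace ℝ F] {φ : E → F}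
    (hc : HasCompactSupport φ) : HasCompactSupport (coulombPotential φ) :=
  hc.smul_left

theorem hasCompactSupport_radialDeriv [NormedSpace ℝ E] [NormedSpace ℝ F] {φ : E → F}
    (hc : HasCompactSupport φ) : HasCompactSupport (radialDeriv φ) :=
  (hc.fderiv ℝ).mono fun x hx hx' => hx (by simp [radialDeriv, hx'])

variable [InnerProductSpace ℝ E]

section NormedTarget

variable [NormedSpace ℝ F] {φ : E → F}

theorem contDiff_coulombPotential {k : WithTop ℕ∞} (hφ : ContDiff ℝ k φ) (h0 : 0 ∉ tsupport φ) :
    ContDiff ℝ k (coulombPotential φ) := by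
  rw [contDiff_iff_contDiffAt]
  intro x
  rcases eq_or_ne x 0 with rfl | hx
  · have eventually_zero : coulombPotential φ =ᶠ[nhds 0] fun _ => 0 := by
      filter_upwards [notMem_tsupport_iff_eventuallyEq.1 h0] with y hy
      simp [coulombPotential, hy]
    exact contDiffAt_const.congr_of_eventuallyEq eventually_zero
  · exact ((contDiffAt_norm ℝ hx).inv (norm_ne_zero_iff.2 hx)).smul hφ.contDiffAt

theorem radialDeriv_eq_fderiv_coulombPotential_add {x : E} (hφ : DifferentiableAt ℝ φ x) :
    radialDeriv φ x = fderiv ℝ (coulombPotential φ) x x + coulombPotential φ x := by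
  rcases eq_or_ne x 0 with rfl | hx
  · simp [radialDeriv, coulombPotential]
  have hx' : ‖x‖ ≠ 0 := norm_ne_zero_iff.2 hx
  have norm_diff : DifferentiableAt ℝ (fun y : E => ‖y‖) x :=
    (contDiffAt_norm ℝ hx (n := 1)).differentiableAt one_ne_zero
  have deriv_inv := (hasDerivAt_inv hx').comp_hasFDerivAt x norm_diff.hasFDerivAt
  have deriv_coulomb : HasFDerivAt (coulombPotential φ) _ x := deriv_inv.smul hφ.hasFDerivAt
  have cancel : (‖x‖ ^ 2)⁻¹ * ‖x‖ = ‖x‖⁻¹ := by field_simp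
  simp [deriv_coulomb.fderiv, norm_diff.fderiv_norm_self, cancel, radialDeriv, coulombPotential]

theorem continuous_radialDeriv (hφ : ContDiff ℝ 1 φ) (h0 : 0 ∉ tsupport φ) :
    Continuous (radialDeriv φ) := by
  have hV := contDiff_coulombPotential hφ h0
  refine Continuous.congr ?_ fun x =>
    (radialDeriv_eq_fderiv_coulombPotential_add (hφ.differentiable one_ne_zero x)).symm
  exact ((hV.continuous_fderiv one_ne_zero).clm_apply continuous_id).add hV.continuous

variable [MeasurableSpace E] [OpensMeasurableSpace E] {μ : Measure E}
  [IsFiniteMeasureOnCompacts μ]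

theorem memLp_coulombPotential (hφ : ContDiff ℝ 1 φ) (hc : HasCompactSupport φ)
    (h0 : 0 ∉ tsupport φ) : MemLp (coulombPotential φ) 2 μ :=
  (contDiff_coulombPotential hφ h0).continuous.memLp_of_hasCompactSupport
    (hasCompactSupport_coulombPotential hc)

theorem memLp_radialDeriv (hφ : ContDiff ℝ 1 φ) (hc : HasCompactSupport φ)
    (h0 : 0 ∉ tsupport φ) : MemLp (radialDeriv φ) 2 μ :=
  (continuous_radialDeriv hφ h0).memLp_of_hasCompactSupport (hasCompactSupport_radialDeriv hc)

theorem memLp_symmRadialDeriv (hφ : ContDiff ℝ 1 φ) (hc : HasCompactSupport φ)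
    (h0 : 0 ∉ tsupport φ) : MemLp (symmRadialDeriv φ) 2 μ :=
  (memLp_radialDeriv hφ hc h0).add ((memLp_coulombPotential hφ hc h0).const_smul _)

theorem memLp_radialMomentum {F : Type*} [NormedAddCommGroup F] [NormedSpace ℂ F] {φ : E → F}
    (hφ : ContDiff ℝ 1 φ) (hc : HasCompactSupport φ) (h0 : 0 ∉ tsupport φ) :
    MemLp (radialMomentum φ) 2 μ :=
  (memLp_symmRadialDeriv hφ hc h0).const_smul _

theorem integral_norm_sq_coulombPotential_pos [μ.IsOpenPosMeasure] (hφ : ContDiff ℝ 1 φ)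
    (hc : HasCompactSupport φ) (h0 : 0 ∉ tsupport φ) (hφ0 : φ ≠ 0) :
    0 < ∫ x, ‖coulombPotential φ x‖ ^ 2 ∂μ := by
  obtain ⟨x, hx⟩ := Function.ne_iff.1 hφ0
  have x_ne_zero : x ≠ 0 := by
    rintro rfl
    exact h0 (subset_tsupport φ hx)
  refine ((contDiff_coulombPotential hφ h0).continuous.norm.pow 2)
    |>.integral_pos_of_hasCompactSupport_nonneg_nonzero (x := x)
      ((hasCompactSupport_coulombPotential hc).comp_left (g := fun z => ‖z‖ ^ 2) (by simp))
      (fun y => by positivity) ?_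
  simpa [coulombPotential, x_ne_zero] using hx

end NormedTarget

section InnerProductTarget

variable [InnerProductSpace ℝ F] {φ : E → F} [FiniteDimensional ℝ E] [MeasurableSpace E]
  [BorelSpace E] {μ : Measure E} [μ.IsAddHaarMeasure]

theorem two_mul_integral_inner_coulombPotential_radialDeriv (hφ : ContDiff ℝ 1 φ)
    (hc : HasCompactSupport φ) (h0 : 0 ∉ tsupport φ) :
    2 * ∫ x, inner ℝ (coulombPotential φ x) (radialDeriv φ x) ∂μ =
      (2 - finrank ℝ E) * ∫ x, ‖coulombPotential φ x‖ ^ 2 ∂μ := by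
  have hV := memLp_coulombPotential (μ := μ) hφ hc h0
  have hD := memLp_radialDeriv (μ := μ) hφ hc h0
  have inner_fderiv (x : E) :
      inner ℝ (coulombPotential φ x) (fderiv ℝ (coulombPotential φ) x x) =
        inner ℝ (coulombPotential φ x) (radialDeriv φ x) - ‖coulombPotential φ x‖ ^ 2 := by
    rw [radialDeriv_eq_fderiv_coulombPotential_add (hφ.differentiable one_ne_zero x),
      inner_add_right, real_inner_self_eq_norm_sq, add_sub_cancel_right]
  have virial := two_mul_integral_inner_fderiv_self (μ := μ) (contDiff_coulombPotential hφ h0)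
    (hasCompactSupport_coulombPotential hc)
  simp_rw [inner_fderiv] at virial
  rw [integral_sub (integrable_inner_of_memLp_two hV hD) (hV.integrable_norm_pow two_ne_zero)]
    at virial
  linarith

theorem two_mul_integral_inner_coulombPotential_symmRadialDeriv (hφ : ContDiff ℝ 1 φ)
    (hc : HasCompactSupport φ) (h0 : 0 ∉ tsupport φ) :
    2 * ∫ x, inner ℝ (coulombPotential φ x) (symmRadialDeriv φ x) ∂μ =
      ∫ x, ‖coulombPotential φ x‖ ^ 2 ∂μ := by
  have hV := memLp_coulombPotential (μ := μ) hφ hc h0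
  have hD := memLp_radialDeriv (μ := μ) hφ hc h0
  have virial := two_mul_integral_inner_coulombPotential_radialDeriv (μ := μ) hφ hc h0
  simp only [symmRadialDeriv, inner_add_right, real_inner_smul_right, real_inner_self_eq_norm_sq]
  rw [integral_add (integrable_inner_of_memLp_two hV hD)
      ((hV.integrable_norm_pow two_ne_zero).const_mul _),
    integral_const_mul]
  linarith

theorem integral_norm_sq_symmRadialDeriv (hφ : ContDiff ℝ 1 φ) (hc : HasCompactSupport φ)
    (h0 : 0 ∉ tsupport φ) :
    ∫ x, ‖symmRadialDeriv φ x‖ ^ 2 ∂μ = ∫ x, ‖radialDeriv φ x‖ ^ 2 ∂μ -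
      ((finrank ℝ E : ℝ) - 1) * ((finrank ℝ E : ℝ) - 3) / 4 *
        ∫ x, ‖coulombPotential φ x‖ ^ 2 ∂μ := by
  have hV := memLp_coulombPotential (μ := μ) hφ hc h0
  have hD := memLp_radialDeriv (μ := μ) hφ hc h0
  have virial := two_mul_integral_inner_coulombPotential_radialDeriv (μ := μ) hφ hc h0
  set c : ℝ := ((finrank ℝ E : ℝ) - 1) / 2
  have toLp_symmRadialDeriv : (memLp_symmRadialDeriv (μ := μ) hφ hc h0).toLp _ =
      hD.toLp _ + c • hV.toLp _ := rfl
  rw [← norm_sq_toLp (memLp_symmRadialDeriv hφ hc h0), toLp_symmRadialDeriv, norm_add_sq_real,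
    norm_smul, mul_pow, Real.norm_eq_abs, sq_abs, real_inner_smul_right, real_inner_comm,
    inner_toLp_toLp, norm_sq_toLp, norm_sq_toLp]
  linear_combination c * virial

theorem sqrt_integral_norm_sq_coulombPotential_le (hφ : ContDiff ℝ 1 φ)
    (hc : HasCompactSupport φ) (h0 : 0 ∉ tsupport φ) :
    √(∫ x, ‖coulombPotential φ x‖ ^ 2 ∂μ) ≤ 2 * √(∫ x, ‖symmRadialDeriv φ x‖ ^ 2 ∂μ) := by
  have hV := memLp_coulombPotential (μ := μ) hφ hc h0
  have hS := memLp_symmRadialDeriv (μ := μ) hφ hc h0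
  have two_mul_inner := two_mul_integral_inner_coulombPotential_symmRadialDeriv (μ := μ) hφ hc h0
  rw [← norm_sq_toLp hV, ← inner_toLp_toLp hV hS] at two_mul_inner
  rw [← norm_toLp_eq_sqrt hV, ← norm_toLp_eq_sqrt hS]
  have cauchy_schwarz := real_inner_le_norm (hV.toLp _) (hS.toLp _)
  rcases (norm_nonneg (hV.toLp _)).eq_or_lt with h | h
  · rw [← h]
    positivity
  · refine le_of_mul_le_mul_left ?_ h
    linarith

end InnerProductTarget

section ComplexTarget

variable [InnerProductSpace ℂ F] {φ : E → F} [FiniteDimensional ℝ E] [MeasurableSpace E]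
  [BorelSpace E] {μ : Measure E} [μ.IsAddHaarMeasure]

theorem integral_norm_sq_coulombPotential_eq_im (hφ : ContDiff ℝ 1 φ)
    (hc : HasCompactSupport φ) (h0 : 0 ∉ tsupport φ) :
    ∫ x, ‖coulombPotential φ x‖ ^ 2 ∂μ =
      -2 * (∫ x, inner ℂ (coulombPotential φ x) (radialMomentum φ x) ∂μ).im := by
  let : InnerProductSpace ℝ F := InnerProductSpace.complexToReal
  have im_inner (x : E) : (inner ℂ (coulombPotential φ x) (radialMomentum φ x)).im =
      -inner ℝ (coulombPotential φ x) (symmRadialDeriv φ x) := by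
    simp [radialMomentum, inner_smul_right, real_inner_eq_re_inner ℂ]
  have integrable_inner := integrable_inner_of_memLp_two (𝕜 := ℂ)
    (memLp_coulombPotential (μ := μ) hφ hc h0) (memLp_radialMomentum (μ := μ) hφ hc h0)
  rw [← RCLike.im_eq_complex_im, ← integral_im integrable_inner]
  simp only [RCLike.im_eq_complex_im, im_inner, integral_neg]
  rw [← two_mul_integral_inner_coulombPotential_symmRadialDeriv hφ hc h0]
  ring

theorem stmt_19_general (hφ : ContDiff ℝ 1 φ) (hc : HasCompactSupport φ) (h0 : 0 ∉ tsupport φ)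
    (hφ0 : φ ≠ 0) {nA nB : ℝ} (hnA : nA = √(∫ x, ‖radialMomentum φ x‖ ^ 2 ∂μ))
    (hnB : nB = √(∫ x, ‖coulombPotential φ x‖ ^ 2 ∂μ)) :
    (∫ x, ‖coulombPotential φ x‖ ^ 2 ∂μ =
        -2 * (∫ x, inner ℂ (coulombPotential φ x) (radialMomentum φ x) ∂μ).im ∧
      ∫ x, ‖coulombPotential φ x‖ ^ 2 ∂μ = nA * nB *
        (2 - ∫ x, ‖(nA : ℂ)⁻¹ • radialMomentum φ x +
          Complex.I • (nB : ℂ)⁻¹ • coulombPotential φ x‖ ^ 2 ∂μ)) ∧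
    nA ^ 2 = ∫ x, ‖radialDeriv φ x‖ ^ 2 ∂μ -
      ((finrank ℝ E : ℝ) - 1) * ((finrank ℝ E : ℝ) - 3) / 4 * nB ^ 2 ∧
    nB ≤ 2 * √(∫ x, ‖symmRadialDeriv φ x‖ ^ 2 ∂μ) := by
  let : InnerProductSpace ℝ F := InnerProductSpace.complexToReal
  have nA_eq : nA = √(∫ x, ‖symmRadialDeriv φ x‖ ^ 2 ∂μ) := by
    simp only [hnA, norm_radialMomentum]
  have hardy : nB ≤ 2 * √(∫ x, ‖symmRadialDeriv φ x‖ ^ 2 ∂μ) :=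
    hnB ▸ sqrt_integral_norm_sq_coulombPotential_le hφ hc h0
  have nB_pos : 0 < nB :=
    hnB ▸ Real.sqrt_pos.2 (integral_norm_sq_coulombPotential_pos hφ hc h0 hφ0)
  have nA_pos : 0 < nA := by linarith
  have im_identity := integral_norm_sq_coulombPotential_eq_im (μ := μ) hφ hc h0
  refine ⟨⟨im_identity, ?_⟩, ?_, hardy⟩
  · rw [im_identity, mul_mul_two_sub_integral_norm_sq (memLp_radialMomentum hφ hc h0)
      (memLp_coulombPotential hφ hc h0) hnA hnB nA_pos.ne' nB_pos.ne']
  · rw [nA_eq, hnB, Real.sq_sqrt (by positivity), Real.sq_sqrt (by positivity)]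
    exact integral_norm_sq_symmRadialDeriv hφ hc h0

end ComplexTarget

end RadialDerivative

section EuclideanSpace

theorem coulombPotential_eq_div {E : Type*} [NormedAddCommGroup E] (φ : E → ℂ) :
    coulombPotential φ = fun x => φ x / (‖x‖ : ℂ) := by
  funext x
  rw [coulombPotential, Complex.real_smul, Complex.ofReal_inv, div_eq_inv_mul]

variable {n : ℕ} (φ : EuclideanSpace ℝ (Fin n) → ℂ)

theorem radialDeriv_eq_sum :
    radialDeriv φ = fun x =>
      ∑ j, ((x j / ‖x‖ : ℝ) : ℂ) * fderiv ℝ φ x (EuclideanSpace.single j 1) := by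
  funext x
  have expansion := congrArg (fderiv ℝ φ x) ((EuclideanSpace.basisFun (Fin n) ℝ).sum_repr x)
  simp only [map_sum, map_smul, EuclideanSpace.basisFun_repr, EuclideanSpace.basisFun_apply]
    at expansion
  simp only [radialDeriv, ← expansion, Finset.smul_sum, smul_smul, inv_mul_eq_div,
    ← Complex.real_smul]

theorem symmRadialDeriv_eq_add (x : EuclideanSpace ℝ (Fin n)) :
    symmRadialDeriv φ x = radialDeriv φ x + ((((n : ℝ) - 1) / (2 * ‖x‖) : ℝ) : ℂ) * φ x := by
  rw [symmRadialDeriv, coulombPotential, smul_smul, finrank_euclideanSpace_fin,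
    ← div_eq_mul_inv, div_div, Complex.real_smul]

theorem radialMomentum_eq_sub :
    radialMomentum φ = fun x => -Complex.I * radialDeriv φ x -
      Complex.I * ((((n : ℝ) - 1) / (2 * ‖x‖) : ℝ) : ℂ) * φ x := by
  funext x
  rw [radialMomentum, symmRadialDeriv_eq_add, smul_eq_mul]
  ring

end EuclideanSpace

/-- Uncertainty relation between the symmetrized radial derivative
`Aφ = −i(x/|x|)·∇φ − i((n−1)/(2|x|))φ` and the Coulomb potential `Bφ = φ/|x|`
for `n ≥ 3` and a smooth `φ` compactly supported in `ℝⁿ \ {0}`.  Here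
`R = ∂_r φ = (x/|x|)·∇φ`, `nA, nB` are the `L²` norms of `Aφ`, `Bφ`, and the
scalar product `(f|g) = ∫ f conj g` is linear in the first variable. -/
theorem stmt_19 (n : ℕ) (hn : 3 ≤ n)
    (φ : EuclideanSpace ℝ (Fin n) → ℂ)
    (hφ : ContDiff ℝ (⊤ : ℕ∞) φ) (hsupp : HasCompactSupport φ)
    (h0 : 0 ∉ tsupport φ)
    (R A B : EuclideanSpace ℝ (Fin n) → ℂ)
    (hR : R = fun x =>
      ∑ j, ((x j / ‖x‖ : ℝ) : ℂ) * fderiv ℝ φ x (EuclideanSpace.single j 1))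
    (hA : A = fun x =>
      -Complex.I * R x - Complex.I * ((((n : ℝ) - 1) / (2 * ‖x‖) : ℝ) : ℂ) * φ x)
    (hB : B = fun x => φ x / (‖x‖ : ℂ))
    (hA0 : A ≠ 0) (hB0 : B ≠ 0)
    (nA nB : ℝ)
    (hnA : nA = Real.sqrt (∫ x, ‖A x‖ ^ 2))
    (hnB : nB = Real.sqrt (∫ x, ‖B x‖ ^ 2)) :
    (∫ x, ‖B x‖ ^ 2 = -2 * (∫ x, A x * (starRingEnd ℂ) (B x)).im ∧
      ∫ x, ‖B x‖ ^ 2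
        = nA * nB *
          (2 - ∫ x, ‖(nA : ℂ)⁻¹ * A x + Complex.I * ((nB : ℂ)⁻¹ * B x)‖ ^ 2)) ∧
    nA ^ 2 = (∫ x, ‖R x‖ ^ 2) - ((n : ℝ) - 1) * ((n : ℝ) - 3) / 4 * nB ^ 2 ∧
    nB ≤ 2 * Real.sqrt
        (∫ x, ‖R x + ((((n : ℝ) - 1) / (2 * ‖x‖) : ℝ) : ℂ) * φ x‖ ^ 2) := by
  rw [← radialDeriv_eq_sum] at hR
  subst hR
  rw [← radialMomentum_eq_sub] at hA
  rw [← coulombPotential_eq_div] at hB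
  subst hA hB
  have φ_ne_zero : φ ≠ 0 := by
    rintro rfl
    exact hB0 (by simp only [coulombPotential_eq_div, Pi.zero_apply, zero_div]; rfl)
  simpa only [finrank_euclideanSpace_fin, symmRadialDeriv_eq_add, RCLike.inner_apply,
    smul_eq_mul] using
    stmt_19_general (hφ.of_le (by simp)) hsupp h0 φ_ne_zero hnA hnB
end
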